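/- For α ∈ L^+: α ∈ Σ̃_λ if and only if α ≠ 0, α ∈ ℕR̃^+_λ, and (β, α−β) ≤ −2 whenever β and α−β are both nonzero elements of ℕR̃^+_λ. -/

import Mathlib

open Polynomial Matrix BigOperators

namespace DS

noncomputable section

/-- The data of a collection of HTL normal forms `B⁽ⁱ⁾`, `i = 0,…,p`, on `ℂⁿ`:
block counts `m i`, pole orders `kk i`, block sizes `nn i j`, irregular parts
`q i j ∈ s²ℂ[s]` (pairwise distinct, degree ≤ kk i), residue blocks `R i j`,
chosen annihilating eigenvalue lists `ξ i j`, and an identification of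
`Σ j, Fin (nn i j)` with `Fin n` (the block decomposition of `ℂⁿ`). -/
structure Setup where
  p : ℕ
  n : ℕ
  hn : 0 < n
  m : Fin (p+1) → ℕ
  hm : ∀ i, 0 < m i
  kk : Fin (p+1) → ℕ
  hkk : ∀ i, 0 < kk i
  nn : ∀ i : Fin (p+1), Fin (m i) → ℕ
  q : ∀ i : Fin (p+1), Fin (m i) → Polynomial ℂ
  hq0 : ∀ i j, (q i j).coeff 0 = 0
  hq1 : ∀ i j, (q i j).coeff 1 = 0
  hqdeg : ∀ i j, (q i j).natDegree ≤ kk i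
  hqdist : ∀ i : Fin (p+1), ∀ j j' : Fin (m i), j ≠ j' → q i j ≠ q i j'
  e : ∀ i : Fin (p+1), Fin (m i) → ℕ
  he : ∀ i j, 0 < e i j
  xi : ∀ (i : Fin (p+1)) (j : Fin (m i)), Fin (e i j) → ℂ
  R : ∀ (i : Fin (p+1)) (j : Fin (m i)), Matrix (Fin (nn i j)) (Fin (nn i j)) ℂ
  hxi : ∀ i j, (((List.finRange (e i j)).map fun l => R i j - xi i j l • 1).prod) = 0
  emb : ∀ i : Fin (p+1), (Σ j : Fin (m i), Fin (nn i j)) ≃ Fin n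
  hreg : ∀ i : Fin (p+1), ¬ (1 < m i ∨ i = 0) → kk i = 1

/-- `i ∈ I_irr` : the indices of irregular singular points together with `0`. -/
def Iirr (S : Setup) (i : Fin (S.p+1)) : Prop := 1 < S.m i ∨ i = 0

instance (S : Setup) : DecidablePred (Iirr S) := fun i =>
  inferInstanceAs (Decidable (1 < S.m i ∨ i = 0))

/-- Vertices `[i,j]` for `i ∈ I_irr`. -/
abbrev Vb (S : Setup) := Σ i : {i : Fin (S.p+1) // Iirr S i}, Fin (S.m i.1)

/-- Vertices `[i,j,k]` for `0 ≤ i ≤ p`, `1 ≤ j ≤ m⁽ⁱ⁾`, `1 ≤ k ≤ e[i,j]-1`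
(the third component `κ` encodes `k = κ+1`). -/
abbrev Vr (S : Setup) := Σ i : Fin (S.p+1), Σ j : Fin (S.m i), Fin (S.e i j - 1)

/-- The vertex set `Q₀` of the quiver `Q`. -/
abbrev V (S : Setup) := Vb S ⊕ Vr S

/-- `d_i(j,j') = deg (q_j - q_j') - 2`. -/
def dcnt (S : Setup) (i : Fin (S.p+1)) (j j' : Fin (S.m i)) : ℕ :=
  (S.q i j - S.q i j').natDegree - 2

/-- The number of arrows of `Q` from a vertex `a` to a vertex `b`. -/
def arr (S : Setup) : V S → V S → ℕ
  | .inl ⟨i, j⟩, .inl ⟨i', j'⟩ =>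
      (if i.1 = 0 ∧ i'.1 ≠ 0 then 1 else 0) +
      (if h : i = i' then
        (if (j : ℕ) < (j' : ℕ) then dcnt S i.1 j (Fin.cast (by rw [h]) j') else 0)
       else 0)
  | .inl _, .inr _ => 0
  | .inr ⟨i, j, κ⟩, .inl ⟨i', j'⟩ =>
      (if i = i'.1 ∧ (j : ℕ) = (j' : ℕ) ∧ (κ : ℕ) = 0 then 1 else 0) +
      (if ¬ Iirr S i ∧ i'.1 = 0 ∧ (j : ℕ) = 0 ∧ (κ : ℕ) = 0 then 1 else 0)
  | .inr ⟨i, j, κ⟩, .inr ⟨i', j', κ'⟩ =>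
      if i = i' ∧ (j : ℕ) = (j' : ℕ) ∧ (κ : ℕ) = (κ' : ℕ) + 1 then 1 else 0

/-- The Euler form `⟨β,γ⟩` of the quiver `Q`. -/
def eform (S : Setup) (β γ : V S → ℤ) : ℤ :=
  (∑ a : V S, β a * γ a) - ∑ a : V S, ∑ b : V S, (arr S a b : ℤ) * β a * γ b

/-- The symmetrized bilinear form `(β,γ)`. -/
def bform (S : Setup) (β γ : V S → ℤ) : ℤ := eform S β γ + eform S γ β

/-- The quadratic form `q(β)`. -/
def qform (S : Setup) (β : V S → ℤ) : ℤ := eform S β β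

/-- `p(β) = 1 - q(β)`. -/
def pform (S : Setup) (β : V S → ℤ) : ℤ := 1 - qform S β

/-- The coordinate vector `ε_a`. -/
def eps (S : Setup) (a : V S) : V S → ℤ := fun b => if b = a then 1 else 0

/-- The fundamental reflection `s_a`. -/
def refl1 (S : Setup) (a : V S) (β : V S → ℤ) : V S → ℤ :=
  fun b => β b - bform S β (eps S a) * eps S a b

/-- Iterated fundamental reflections (a Weyl group element). -/
def reflList (S : Setup) (l : List (V S)) (β : V S → ℤ) : V S → ℤ :=
  l.foldr (refl1 S) β

/-- The support of a vector. -/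
def supp (S : Setup) (β : V S → ℤ) : Set (V S) := {a | β a ≠ 0}

/-- The support of `β` is connected in the underlying graph of `Q`. -/
def connSupp (S : Setup) (β : V S → ℤ) : Prop :=
  ∀ a ∈ supp S β, ∀ b ∈ supp S β,
    Relation.ReflTransGen
      (fun x y => (0 < arr S x y + arr S y x) ∧ x ∈ supp S β ∧ y ∈ supp S β) a b

/-- The fundamental set of the root system of `Q` (all vertices of `Q` are loop-free). -/
def fund (S : Setup) (β : V S → ℤ) : Prop :=
  β ≠ 0 ∧ (∀ a, 0 ≤ β a) ∧ connSupp S β ∧ ∀ a : V S, bform S β (eps S a) ≤ 0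

/-- Real roots of `Q`. -/
def isRealRoot (S : Setup) (β : V S → ℤ) : Prop :=
  ∃ (l : List (V S)) (a : V S), β = reflList S l (eps S a)

/-- Imaginary roots of `Q`. -/
def isImagRoot (S : Setup) (β : V S → ℤ) : Prop :=
  ∃ (l : List (V S)) (γ : V S → ℤ), (fund S γ ∨ fund S (-γ)) ∧ β = reflList S l γ

/-- Roots of `Q`. -/
def isRoot (S : Setup) (β : V S → ℤ) : Prop := isRealRoot S β ∨ isImagRoot S β

/-- Positive roots of `Q`. -/
def isPosRoot (S : Setup) (β : V S → ℤ) : Prop := isRoot S β ∧ ∀ a, 0 ≤ β a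

/-- The index `0` as an element of `I_irr`. -/
def i0 (S : Setup) : {i : Fin (S.p+1) // Iirr S i} := ⟨0, Or.inr rfl⟩

/-- The vertex `[0,j]`. -/
def v0 (S : Setup) (j : Fin (S.m 0)) : V S := Sum.inl ⟨i0 S, j⟩

/-- The vertex `[i,j]` for `i ∈ I_irr`. -/
def vI (S : Setup) (i : {i : Fin (S.p+1) // Iirr S i}) (j : Fin (S.m i.1)) : V S :=
  Sum.inl ⟨i, j⟩

/-- The lattice `L`: `Σ_j β_[0,j] = Σ_j β_[i,j]` for all `i ∈ I_irr ∖ {0}`. -/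
def inL (S : Setup) (β : V S → ℤ) : Prop :=
  ∀ i : {i : Fin (S.p+1) // Iirr S i}, i.1 ≠ 0 →
    (∑ j : Fin (S.m 0), β (v0 S j)) = ∑ j : Fin (S.m i.1), β (vI S i j)

/-- `L⁺ = L ∩ (ℤ≥0)^{Q₀}`. -/
def inLpos (S : Setup) (β : V S → ℤ) : Prop := inL S β ∧ ∀ a, 0 ≤ β a

/-- The dimension vector `α` (as natural numbers):
`α_[i,j] = n⁽ⁱ⁾_j`, `α_[i,j,k] = rank ∏_{l=1}^k (R⁽ⁱ⁾_j - ξ^{[i,j]}_l)`. -/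
noncomputable def alN (S : Setup) : V S → ℕ
  | .inl ⟨i, j⟩ => S.nn i.1 j
  | .inr ⟨i, j, κ⟩ =>
      ((((List.finRange (S.e i j)).take ((κ : ℕ) + 1)).map
          fun l => S.R i j - S.xi i j l • 1).prod).rank

/-- The dimension vector `α` as an integer vector. -/
noncomputable def alZ (S : Setup) : V S → ℤ := fun a => (alN S a : ℤ)

/-- The parameter `λ ∈ ℂ^{Q₀}`. -/
noncomputable def lam (S : Setup) : V S → ℂ
  | .inl ⟨i, j⟩ =>
      if h : i.1 = 0 then
        (- S.xi 0 (Fin.cast (by rw [h]) j) ⟨0, S.he 0 (Fin.cast (by rw [h]) j)⟩)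
          - ∑ i' ∈ Finset.univ.filter (fun i' : Fin (S.p+1) => ¬ Iirr S i'),
              S.xi i' ⟨0, S.hm i'⟩ ⟨0, S.he i' ⟨0, S.hm i'⟩⟩
      else - S.xi i.1 j ⟨0, S.he i.1 j⟩
  | .inr ⟨i, j, κ⟩ =>
      S.xi i j ⟨(κ : ℕ), by have := κ.2; omega⟩
        - S.xi i j ⟨(κ : ℕ) + 1, by have := κ.2; omega⟩

/-- Pairing `β · μ = Σ_a β_a μ_a` between `ℤ^{Q₀}` and `ℂ^{Q₀}`. -/
noncomputable def dotC (S : Setup) (β : V S → ℤ) (μ : V S → ℂ) : ℂ :=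
  ∑ a : V S, (β a : ℂ) * μ a

/-- `β ∈ R̃⁺_μ` : positive roots of `Q` lying in `L` with `β·μ = 0`. -/
def inRt (S : Setup) (μ : V S → ℂ) (β : V S → ℤ) : Prop :=
  isPosRoot S β ∧ inL S β ∧ dotC S β μ = 0

/-- `β ∈ ℕR̃⁺_μ` : finite sums (including `0`) of elements of `R̃⁺_μ`. -/
def inNRt (S : Setup) (μ : V S → ℂ) (β : V S → ℤ) : Prop :=
  ∃ (r : ℕ) (γ : Fin r → (V S → ℤ)), (∀ t, inRt S μ (γ t)) ∧ β = ∑ t, γ t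

/-- `β ∈ Σ̃_μ`. -/
def inSig (S : Setup) (μ : V S → ℂ) (β : V S → ℤ) : Prop :=
  inRt S μ β ∧ ∀ (r : ℕ), 2 ≤ r → ∀ γ : Fin r → (V S → ℤ),
    (∀ t, inRt S μ (γ t)) → β = ∑ t, γ t → (∑ t, pform S (γ t)) < pform S β

/-! ### The matrix side: truncated orbits.

An element `Σ_{j=1}^{k} A_j x^{-j}` of `𝔤_k*` is encoded as the polynomial matrix
`Σ_{j=1}^{k} A_j x^{k-j}` (of degree `< k`); the coadjoint `G_k`-action becomes
conjugation modulo `x^k` by polynomial matrices with invertible constant term. -/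

abbrev PMat (S : Setup) := Matrix (Fin S.n) (Fin S.n) (Polynomial ℂ)

/-- All entries have degree `< k`. -/
def degLT (S : Setup) (k : ℕ) (A : PMat S) : Prop :=
  ∀ a b, (A a b).degree < (k : ℕ)

/-- The HTL normal form `B⁽ⁱ⁾`, in the polynomial encoding. -/
noncomputable def Bmat (S : Setup) (i : Fin (S.p+1)) : PMat S :=
  Matrix.of fun a b =>
    if h : ((S.emb i).symm a).1 = ((S.emb i).symm b).1 then
      (if Fin.cast (by rw [h]) ((S.emb i).symm a).2 = ((S.emb i).symm b).2 then
          Polynomial.reflect (S.kk i) (S.q i ((S.emb i).symm b).1)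
        else 0)
        + Polynomial.C
            (S.R i ((S.emb i).symm b).1 (Fin.cast (by rw [h]) ((S.emb i).symm a).2)
              ((S.emb i).symm b).2)
          * Polynomial.X ^ (S.kk i - 1)
    else 0

/-- Membership in the truncated orbit `𝒪_{B⁽ⁱ⁾}`. -/
def inOrbit (S : Setup) (i : Fin (S.p+1)) (A : PMat S) : Prop :=
  degLT S (S.kk i) A ∧
  ∃ g : PMat S, IsUnit (g.map fun r => r.coeff 0) ∧
    ∀ a b, (Polynomial.X ^ (S.kk i) : Polynomial ℂ) ∣ (g * Bmat S i - A * g) a b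

/-- The residue matrix `A⁽ⁱ⁾₁`. -/
def resMat (S : Setup) (i : Fin (S.p+1)) (A : PMat S) : Matrix (Fin S.n) (Fin S.n) ℂ :=
  Matrix.of fun a b => (A a b).coeff (S.kk i - 1)

/-- `(A⁽ⁱ⁾)_{0≤i≤p} ∈ ∏ 𝒪_{B⁽ⁱ⁾}` with `Σ A⁽ⁱ⁾₁ = 0`. -/
def isDSElem (S : Setup) (A : ∀ _ : Fin (S.p+1), PMat S) : Prop :=
  (∀ i, inOrbit S i (A i)) ∧ (∑ i, resMat S i (A i)) = 0

/-- Irreducibility of the collection of all coefficient matrices `A⁽ⁱ⁾_j`. -/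
def irredTuple (S : Setup) (A : ∀ _ : Fin (S.p+1), PMat S) : Prop :=
  ∀ W : Submodule ℂ (Fin S.n → ℂ),
    (∀ (i : Fin (S.p+1)) (l : ℕ), ∀ v ∈ W,
        (Matrix.of fun a b => (A i a b).coeff l).mulVec v ∈ W) →
    W = ⊥ ∨ W = ⊤

/-! ### Representations of the double quiver -/

/-- A representation of the double quiver `Q̄` with dimension vector `β`:
`f a b ρ` is the matrix of `ψ_ρ : ℂ^{β a} → ℂ^{β b}` and `g a b ρ` the matrix of
`ψ_{ρ*} : ℂ^{β b} → ℂ^{β a}`, for the `ρ`-th arrow `a → b` of `Q`. -/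
structure Rep (S : Setup) (β : V S → ℕ) where
  f : ∀ a b : V S, Fin (arr S a b) → Matrix (Fin (β b)) (Fin (β a)) ℂ
  g : ∀ a b : V S, Fin (arr S a b) → Matrix (Fin (β a)) (Fin (β b)) ℂ

/-- The moment map at a vertex `c`. -/
noncomputable def moment (S : Setup) {β : V S → ℕ} (M : Rep S β) (c : V S) :
    Matrix (Fin (β c)) (Fin (β c)) ℂ :=
  (∑ a : V S, ∑ ρ : Fin (arr S a c), M.f a c ρ * M.g a c ρ)
    - ∑ b : V S, ∑ ρ : Fin (arr S c b), M.g c b ρ * M.f c b ρ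

/-- `M ∈ Rep(Q̄,β)_μ`. -/
def onMu (S : Setup) {β : V S → ℕ} (μ : V S → ℂ) (M : Rep S β) : Prop :=
  ∀ c : V S, moment S M c = μ c • (1 : Matrix (Fin (β c)) (Fin (β c)) ℂ)

/-- The block matrix `(ψ_{ρ^{[0,j]}_{[i,j']}})_{j,j'}` for `i ∈ I_irr ∖ {0}`. -/
noncomputable def crossMat (S : Setup) {β : V S → ℕ} (M : Rep S β)
    (i : {i : Fin (S.p+1) // Iirr S i}) :
    Matrix (Σ j' : Fin (S.m i.1), Fin (β (vI S i j'))) (Σ j : Fin (S.m 0), Fin (β (v0 S j))) ℂ :=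
  Matrix.of fun x y =>
    if h : 0 < arr S (v0 S y.1) (vI S i x.1) then
      M.f (v0 S y.1) (vI S i x.1) ⟨0, h⟩ x.2 y.2
    else 0

/-- All the block matrices `(ψ_{ρ^{[0,j]}_{[i,j']}})` for `i ∈ I_irr ∖ {0}` are invertible. -/
def crossBij (S : Setup) {β : V S → ℕ} (M : Rep S β) : Prop :=
  ∀ i : {i : Fin (S.p+1) // Iirr S i}, i.1 ≠ 0 →
    Function.Bijective ((crossMat S M i).mulVec)

/-- The combined map `(ψ_{ρ^{[i,1,1]}_{[0,j]}})_j : ℂ^{β [i,1,1]} → ⊕_j ℂ^{β [0,j]}`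
(for `i ∈ I_reg`). -/
noncomputable def regMatF (S : Setup) {β : V S → ℕ} (M : Rep S β)
    (i : Fin (S.p+1)) (j : Fin (S.m i)) (κ : Fin (S.e i j - 1)) :
    Matrix (Σ j' : Fin (S.m 0), Fin (β (v0 S j'))) (Fin (β (Sum.inr ⟨i, j, κ⟩))) ℂ :=
  Matrix.of fun x y =>
    if h : 0 < arr S (Sum.inr ⟨i, j, κ⟩) (v0 S x.1) then
      M.f (Sum.inr ⟨i, j, κ⟩) (v0 S x.1) ⟨0, h⟩ x.2 y
    else 0

/-- The combined map `(ψ_{(ρ^{[i,1,1]}_{[0,j]})*})_j : ⊕_j ℂ^{β [0,j]} → ℂ^{β [i,1,1]}`. -/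
noncomputable def regMatG (S : Setup) {β : V S → ℕ} (M : Rep S β)
    (i : Fin (S.p+1)) (j : Fin (S.m i)) (κ : Fin (S.e i j - 1)) :
    Matrix (Fin (β (Sum.inr ⟨i, j, κ⟩))) (Σ j' : Fin (S.m 0), Fin (β (v0 S j'))) ℂ :=
  Matrix.of fun y x =>
    if h : 0 < arr S (Sum.inr ⟨i, j, κ⟩) (v0 S x.1) then
      M.g (Sum.inr ⟨i, j, κ⟩) (v0 S x.1) ⟨0, h⟩ y x.2
    else 0

/-- `M ∈ Rep(Q̄,β)_μ^{dif}` (the open conditions). -/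
def difCond (S : Setup) {β : V S → ℕ} (M : Rep S β) : Prop :=
  crossBij S M ∧
  (∀ (i : Fin (S.p+1)), ¬ Iirr S i → ∀ (j : Fin (S.m i)) (κ : Fin (S.e i j - 1)),
      (κ : ℕ) = 0 →
      Function.Injective ((regMatF S M i j κ).mulVec) ∧
      Function.Surjective ((regMatG S M i j κ).mulVec)) ∧
  (∀ (i : Fin (S.p+1)) (j : Fin (S.m i)) (κ : Fin (S.e i j - 1)) (b : V S)
      (ρ : Fin (arr S (Sum.inr ⟨i, j, κ⟩) b)),
      (¬ Iirr S i ∧ (κ : ℕ) = 0) ∨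
      (Function.Injective ((M.f (Sum.inr ⟨i, j, κ⟩) b ρ).mulVec) ∧
       Function.Surjective ((M.g (Sum.inr ⟨i, j, κ⟩) b ρ).mulVec)))

/-- A family of subspaces forming a subrepresentation of `M`. -/
def isSubrep (S : Setup) {β : V S → ℕ} (M : Rep S β)
    (W : ∀ a : V S, Submodule ℂ (Fin (β a) → ℂ)) : Prop :=
  ∀ (a b : V S) (ρ : Fin (arr S a b)),
    (∀ v ∈ W a, (M.f a b ρ).mulVec v ∈ W b) ∧ (∀ v ∈ W b, (M.g a b ρ).mulVec v ∈ W a)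

/-- Irreducibility of a representation. -/
def irredRep (S : Setup) {β : V S → ℕ} (M : Rep S β) : Prop :=
  ∀ W, isSubrep S M W → (∀ a, W a = ⊥) ∨ (∀ a, W a = ⊤)

/-- A dimension vector is balanced if `Σ_j γ_[0,j] = Σ_j γ_[i,j]` for all `i ∈ I_irr∖{0}`. -/
def balanced (S : Setup) (γ : V S → ℕ) : Prop :=
  ∀ i : {i : Fin (S.p+1) // Iirr S i}, i.1 ≠ 0 →
    (∑ j : Fin (S.m 0), γ (v0 S j)) = ∑ j : Fin (S.m i.1), γ (vI S i j)

/-- Quasi-irreducibility: no nontrivial proper subrepresentation with balanced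
dimension vector. -/
def quasiIrred (S : Setup) {β : V S → ℕ} (M : Rep S β) : Prop :=
  ∀ W, isSubrep S M W → balanced S (fun a => Module.finrank ℂ (W a)) →
    (∀ a, W a = ⊥) ∨ (∀ a, W a = ⊤)

/-- Simultaneous conjugation of representations by `∏_a GL(β_a, ℂ)`. -/
def repConj (S : Setup) {β : V S → ℕ} (M N : Rep S β) : Prop :=
  ∃ g : ∀ a : V S, (Matrix (Fin (β a)) (Fin (β a)) ℂ)ˣ,
    (∀ a b ρ, N.f a b ρ = ((g b).val * M.f a b ρ) * ((g a)⁻¹).val) ∧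
    (∀ a b ρ, N.g a b ρ = ((g a).val * M.g a b ρ) * ((g b)⁻¹).val)

/-- Simultaneous conjugation of tuples by `GL(n, ℂ)`. -/
def tupConj (S : Setup) (A A' : ∀ _ : Fin (S.p+1), PMat S) : Prop :=
  ∃ g : (Matrix (Fin S.n) (Fin S.n) ℂ)ˣ,
    ∀ i, A' i = (g.val.map Polynomial.C) * A i * ((g⁻¹).val.map Polynomial.C)

/-- Carrier of the moduli space `ℳ*_{st}(𝐁)`. -/
abbrev MstC (S : Setup) := {A : ∀ _ : Fin (S.p+1), PMat S // isDSElem S A ∧ irredTuple S A}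

/-- The moduli space `ℳ*_{st}(𝐁)` of stable connections, identified with conjugacy
classes of irreducible elements of `∏ 𝒪_{B⁽ⁱ⁾}` with vanishing residue sum. -/
abbrev Mst (S : Setup) := Quot (fun A A' : MstC S => tupConj S A.1 A'.1)

abbrev DSC (S : Setup) := {A : ∀ _ : Fin (S.p+1), PMat S // isDSElem S A}

abbrev DSQ (S : Setup) := Quot (fun A A' : DSC S => tupConj S A.1 A'.1)

abbrev RepIrrC (S : Setup) (μ : V S → ℂ) :=
  {M : Rep S (alN S) // onMu S μ M ∧ irredRep S M}

/-- The quiver variety `𝔐^{reg}_μ(Q,α)`. -/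
abbrev Mreg (S : Setup) (μ : V S → ℂ) :=
  Quot (fun M N : RepIrrC S μ => repConj S M.1 N.1)

abbrev DifC (S : Setup) (μ : V S → ℂ) :=
  {M : Rep S (alN S) // onMu S μ M ∧ difCond S M}

abbrev DifQ (S : Setup) (μ : V S → ℂ) :=
  Quot (fun M N : DifC S μ => repConj S M.1 N.1)

abbrev QIC (S : Setup) (μ : V S → ℂ) :=
  {M : Rep S (alN S) // onMu S μ M ∧ quasiIrred S M ∧ crossBij S M}

abbrev QIQ (S : Setup) (μ : V S → ℂ) :=
  Quot (fun M N : QIC S μ => repConj S M.1 N.1)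

/-! ### `J`, `ε_𝐢`, and the equivalence relation `∼` -/

/-- `ε_𝐢 = Σ_{i ∈ I_irr} ε_{[i,j_i]}` for `𝐢 = ([i,j_i]) ∈ 𝒥`. -/
def epsJ (S : Setup) (I : ∀ i : Fin (S.p+1), Fin (S.m i)) : V S → ℤ
  | .inl ⟨i, j⟩ => if (j : ℕ) = (I i.1 : ℕ) then 1 else 0
  | .inr _ => 0

/-- The reflection `s_𝐢`. -/
def sJ (S : Setup) (I : ∀ i : Fin (S.p+1), Fin (S.m i)) (β : V S → ℤ) : V S → ℤ :=
  fun b => β b - bform S β (epsJ S I) * epsJ S I b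

/-- The quasi-fundamental set `F̃`. -/
def quasiFund (S : Setup) (β : V S → ℤ) : Prop :=
  inL S β ∧ (∀ a, 0 ≤ β a) ∧ β ≠ 0 ∧
  (∀ I : ∀ i : Fin (S.p+1), Fin (S.m i), bform S β (epsJ S I) ≤ 0) ∧
  (∀ (i : Fin (S.p+1)) (j : Fin (S.m i)) (κ : Fin (S.e i j - 1)),
      bform S β (eps S (Sum.inr ⟨i, j, κ⟩)) ≤ 0) ∧
  connSupp S β

/-- `μ_𝐢 = Σ_{i ∈ I_irr} μ_{[i,j_i]}`. -/
noncomputable def muJ (S : Setup) (I : ∀ i : Fin (S.p+1), Fin (S.m i)) (μ : V S → ℂ) : ℂ :=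
  ∑ i : {i : Fin (S.p+1) // Iirr S i}, μ (vI S i (I i.1))

/-- The transformed parameter `μ'` in the move `s_𝐢` on pairs. -/
noncomputable def muMove (S : Setup) (I : ∀ i : Fin (S.p+1), Fin (S.m i)) (μ : V S → ℂ) :
    V S → ℂ := fun a =>
  match a with
  | .inl ⟨i, j⟩ =>
      if i.1 = 0 ∧ (j : ℕ) = (I 0 : ℕ) then μ a - 2 * muJ S I μ else μ a
  | .inr ⟨i, j, κ⟩ =>
      if j = I i ∧ (κ : ℕ) = 0 then μ a + muJ S I μ else μ a

/-- The reflected parameter `r_a(μ)` for a vertex `a`. -/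
noncomputable def rvtx (S : Setup) (a : V S) (μ : V S → ℂ) : V S → ℂ :=
  fun b => μ b - ((bform S (eps S a) (eps S b) : ℤ) : ℂ) * μ a

/-- One move generating the relation `∼` on pairs `(β,μ)`. -/
def stepRel (S : Setup) :
    ((V S → ℤ) × (V S → ℂ)) → ((V S → ℤ) × (V S → ℂ)) → Prop := fun x y =>
  (∃ (i : Fin (S.p+1)) (j : Fin (S.m i)) (κ : Fin (S.e i j - 1)),
      x.2 (Sum.inr ⟨i, j, κ⟩) ≠ 0 ∧
      y = (refl1 S (Sum.inr ⟨i, j, κ⟩) x.1, rvtx S (Sum.inr ⟨i, j, κ⟩) x.2)) ∨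
  (∃ I : ∀ i : Fin (S.p+1), Fin (S.m i),
      muJ S I x.2 ≠ 0 ∧ y = (sJ S I x.1, muMove S I x.2))

/-- The smallest equivalence relation `∼` containing all the moves. -/
def pairEquiv (S : Setup) :
    ((V S → ℤ) × (V S → ℂ)) → ((V S → ℤ) × (V S → ℂ)) → Prop :=
  Relation.EqvGen (stepRel S)

/-- The vector `z^{(i₀)}` for `i₀ ∈ I_irr ∖ {0}`. -/
def zvec (S : Setup) (i' : Fin (S.p+1)) : V S → ℂ
  | .inl ⟨i, _⟩ => if i.1 = i' then 1 else if i.1 = 0 then -1 else 0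
  | .inr _ => 0

/-
All conditions involve only the positive roots lying in a subgroup `M` of `ℤ^ι`, here
`L ∩ {β | β · λ = 0}`, and the argument works for every `M`. It rests on the identity
`p (x + y) = p x + p y - 1 - (x, y)`.

Suppose `(β, x - β) ≤ -2` for all splittings of a nonzero `x` in the cone of `M`. Then `x` is a
root, by induction on `x`. The cone contains the restriction of each of its elements to a union of
connected components of its support, so the support of `x` is connected, and `x` lies in the
fundamental region unless `(εᵢ, x) > 0` for some `i`. If `εᵢ ∈ M`, then `x - εᵢ` is in the cone, and
`(εᵢ, x - εᵢ) > -2` forces `x = εᵢ`. If `εᵢ ∉ M`, the reflection `sᵢ` carries the cone of `M` onto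
that of `sᵢ M` and preserves the hypothesis, while `sᵢ x < x`. The inequality for `p` follows by
summing `(γ, x - γ) ≤ -2` over the summands `γ` of `x`.

Conversely, splitting with `(β, γ) ≥ -1` does not decrease the total value of `p`, so every nonzero
element of the cone is a sum of roots in `M` along which `p` does not decrease. Applied to both
summands of a splitting of `x ∈ Σ`, this gives `p β + p γ < p x`, which is `(β, γ) ≤ -2`.

That a simple reflection permutes the positive roots other than its own simple root follows from
the positivity of Weyl translates of simple roots, by induction on Coxeter length.
-/

theorem induction_nonneg {ι : Type*} [Finite ι] {P : (ι → ℤ) → Prop}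
    (step : ∀ x, 0 ≤ x → (∀ y, 0 ≤ y → y < x → P y) → P x) {x : ι → ℤ} (hx : 0 ≤ x) : P x := by
  classical
  have := Fintype.ofFinite ι
  exact (bddBelow_Ici (a := (0 : ι → ℤ))).wellFoundedOn_lt.induction hx step

theorem exists_fin_map_eq {α : Type*} (s : Multiset α) :
    ∃ γ : Fin s.card → α, Finset.univ.val.map γ = s := by
  obtain ⟨l, rfl⟩ : ∃ l : List α, (l : Multiset α) = s := Quot.exists_rep s
  exact ⟨l.get, (Fin.univ_val_map l.get).trans (congrArg _ (List.ofFn_get l))⟩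

section CoxeterSystem

variable {B W : Type*} [Group W] {M : CoxeterMatrix B} (cs : CoxeterSystem M W) {i j : B} {w : W}

theorem simple_commute (h : M i j = 2) : Commute (cs.simple i) (cs.simple j) := by
  have hbraid := cs.wordProd_braidWord_eq j i
  simpa [CoxeterSystem.braidWord, M.symmetric j i, h, CoxeterSystem.alternatingWord,
    CoxeterSystem.wordProd_cons, commute_iff_eq] using hbraid.symm

theorem simple_braid (h : M i j = 3) :
    cs.simple i * cs.simple j * cs.simple i = cs.simple j * cs.simple i * cs.simple j := by
  have hbraid := cs.wordProd_braidWord_eq j i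
  simpa [CoxeterSystem.braidWord, M.symmetric j i, h, CoxeterSystem.alternatingWord,
    CoxeterSystem.wordProd_cons, mul_assoc] using hbraid

theorem not_isRightDescent_mul_simple_of_M_eq_two (h : M i j = 2)
    (hi : ¬ cs.IsRightDescent w i) (hj : cs.IsRightDescent w j) :
    ¬ cs.IsRightDescent (w * cs.simple j) i := by
  intro hji
  have hw : w * cs.simple i = w * cs.simple j * cs.simple i * cs.simple j := by
    rw [mul_assoc (w * _), (simple_commute cs h).eq, ← mul_assoc,
      cs.simple_mul_simple_cancel_right]
  have hle := cs.length_mul_le (w * cs.simple j * cs.simple i) (cs.simple j)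
  rw [← hw, cs.length_simple] at hle
  rw [cs.not_isRightDescent_iff] at hi
  rw [cs.isRightDescent_iff] at hj hji
  omega

theorem not_isRightDescent_mul_simple_of_M_eq_three (h : M i j = 3)
    (hi : ¬ cs.IsRightDescent w i) (hj : cs.IsRightDescent w j)
    (hji : cs.IsRightDescent (w * cs.simple j) i) :
    ¬ cs.IsRightDescent (w * cs.simple j * cs.simple i) j := by
  intro hjij
  set v := w * cs.simple j * cs.simple i * cs.simple j with hv
  have hw : w * cs.simple i = v * cs.simple i * cs.simple j := by
    calc w * cs.simple i
        = w * (cs.simple i * cs.simple j * cs.simple i) * cs.simple i * cs.simple j := by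
          simp [← mul_assoc]
      _ = v * cs.simple i * cs.simple j := by rw [simple_braid cs h]; simp [hv, ← mul_assoc]
  have hle := cs.length_mul_le (v * cs.simple i) (cs.simple j)
  have hle' := cs.length_mul_le v (cs.simple i)
  rw [cs.length_simple] at hle hle'
  rw [← hw] at hle
  rw [cs.not_isRightDescent_iff] at hi
  rw [cs.isRightDescent_iff] at hj hji hjij
  rw [← hv] at hjij
  omega

end CoxeterSystem

/-- A finite quiver without loops on the vertex type `ι`, recorded by its numbers of arrows
`arrows i j` from `i` to `j`. The dimension vectors and roots considered below depend only on
these numbers. -/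
structure LoopFreeQuiver (ι : Type*) where
  arrows : ι → ι → ℕ
  arrows_self : ∀ i, arrows i i = 0

namespace LoopFreeQuiver

variable {ι : Type*} (Q : LoopFreeQuiver ι)

/-- The number of edges between two vertices of the underlying graph, i.e. the negative of an
off-diagonal entry of the generalized Cartan matrix. -/
def edges (i j : ι) : ℕ := Q.arrows i j + Q.arrows j i

theorem edges_comm (i j : ι) : Q.edges i j = Q.edges j i := add_comm _ _

/-- No edge of the quiver joins a vertex of the support of `x` in `s` to one outside `s`. -/
def Separates (s : Set ι) (x : ι → ℤ) : Prop :=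
  ∀ i ∈ s, ∀ j ∉ s, x i ≠ 0 → x j ≠ 0 → Q.edges i j = 0

/-- Connectedness of the support of `x`, as a full subgraph of the quiver, phrased as: one of the
two sides of every separation of the support is empty. -/
def IsConnected (x : ι → ℤ) : Prop :=
  ∀ s, Q.Separates s x → s.indicator x = 0 ∨ sᶜ.indicator x = 0

section Separates

variable {Q} {s : Set ι} {x y : ι → ℤ}

theorem Separates.compl (h : Q.Separates s x) : Q.Separates sᶜ x := fun i hi j hj hxi hxj =>
  (Q.edges_comm i j).trans (h j (Set.notMem_compl_iff.1 hj) i hi hxj hxi)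

theorem Separates.of_support_subset (h : Q.Separates s x) (hyx : ∀ i, x i = 0 → y i = 0) :
    Q.Separates s y := fun i hi j hj hyi hyj =>
  h i hi j hj (mt (hyx i) hyi) (mt (hyx j) hyj)

theorem isConnected_iff_reflTransGen : Q.IsConnected x ↔ ∀ i, x i ≠ 0 → ∀ j, x j ≠ 0 →
    Relation.ReflTransGen (fun k l => 0 < Q.edges k l ∧ x k ≠ 0 ∧ x l ≠ 0) i j := by
  constructor
  · intro h i hi j hj
    by_contra hij
    set s := {k | Relation.ReflTransGen (fun k l => 0 < Q.edges k l ∧ x k ≠ 0 ∧ x l ≠ 0) i k}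
    have his : i ∈ s := Relation.ReflTransGen.refl
    have hjs : j ∉ s := hij
    have hsep : Q.Separates s x := fun k hk l hl hxk hxl => by
      by_contra hkl
      exact hl (Relation.ReflTransGen.tail hk ⟨Nat.pos_of_ne_zero hkl, hxk, hxl⟩)
    rcases h s hsep with hzero | hzero
    · exact hi (by simpa [his] using congrFun hzero i)
    · exact hj (by simpa [hjs] using congrFun hzero j)
  · intro h s hs
    by_contra! hne
    obtain ⟨i, his, hi⟩ : ∃ i, i ∈ s ∧ x i ≠ 0 := by simpa [funext_iff] using hne.1
    obtain ⟨j, hjs, hj⟩ : ∃ j, j ∉ s ∧ x j ≠ 0 := by simpa [funext_iff] using hne.2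
    induction h i hi j hj with
    | refl => exact hjs his
    | @tail k l _ hkl ih =>
      have hks : k ∉ s := fun hks => hkl.1.ne' (hs k hks l hjs hkl.2.1 hkl.2.2)
      exact ih hks hkl.2.1

end Separates

variable [DecidableEq ι]

/-- The Coxeter matrix of the Weyl group. The order of `sᵢ sⱼ` is infinite, which is encoded by
the entry `0`, when `i` and `j` are joined by more than one edge. -/
def coxeterMatrix : CoxeterMatrix ι where
  M := Matrix.of fun i j =>
    if i = j then 1 else if Q.edges i j = 0 then 2 else if Q.edges i j = 1 then 3 else 0
  isSymm := by
    ext i j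
    simp only [Matrix.transpose_apply, Matrix.of_apply, Q.edges_comm i j, eq_comm (a := i)]
  diagonal i := by simp
  off_diagonal i j h := by
    simp only [Matrix.of_apply, h, if_false]
    split_ifs <;> simp

theorem coxeterMatrix_apply (i j : ι) : Q.coxeterMatrix i j =
    if i = j then 1 else if Q.edges i j = 0 then 2 else if Q.edges i j = 1 then 3 else 0 := rfl

/-- The coordinate vector at a vertex. -/
abbrev simpleRoot (i : ι) : ι → ℤ := Pi.single i 1

theorem simpleRoot_nonneg (i : ι) : 0 ≤ simpleRoot i := Pi.single_nonneg.2 zero_le_one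

theorem simpleRoot_ne_zero (i : ι) : simpleRoot i ≠ 0 := Pi.single_ne_zero_iff.2 one_ne_zero

theorem isConnected_simpleRoot (i : ι) : Q.IsConnected (simpleRoot i) := by
  intro s _
  by_cases hi : i ∈ s
  · right
    ext j
    by_cases hj : j = i <;> simp [hj, hi]
  · left
    ext j
    by_cases hj : j = i <;> simp [hj, hi]

variable [Fintype ι]

/-- The Euler form `⟨x, y⟩ = ∑ xᵢ yᵢ - ∑ xᵢ yⱼ` of the quiver, the second sum being over the
arrows `i → j`. -/
def eulerForm : LinearMap.BilinForm ℤ (ι → ℤ) :=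
  Matrix.toBilin' (1 - Matrix.of fun i j => (Q.arrows i j : ℤ))

/-- The symmetrized Euler form `(x, y)`. -/
def form : LinearMap.BilinForm ℤ (ι → ℤ) := Q.eulerForm + Q.eulerForm.flip

/-- The function `p = 1 - q`, where `q` is the quadratic form of the quiver. -/
def p (x : ι → ℤ) : ℤ := 1 - Q.eulerForm x x

theorem form_apply (x y : ι → ℤ) : Q.form x y = Q.eulerForm x y + Q.eulerForm y x := rfl

theorem form_comm (x y : ι → ℤ) : Q.form x y = Q.form y x := by
  rw [form_apply, form_apply, add_comm]

theorem form_self (x : ι → ℤ) : Q.form x x = 2 - 2 * Q.p x := by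
  rw [form_apply, p]; ring

theorem p_add (x y : ι → ℤ) : Q.p (x + y) = Q.p x + Q.p y - 1 - Q.form x y := by
  simp only [p, form_apply, map_add, LinearMap.add_apply]; ring

theorem form_simpleRoot (i j : ι) :
    Q.form (simpleRoot i) (simpleRoot j) = (if i = j then 2 else 0) - (Q.edges i j : ℤ) := by
  simp only [form_apply, eulerForm, Matrix.toBilin'_single, Matrix.sub_apply, Matrix.one_apply,
    Matrix.of_apply, edges, eq_comm (a := j)]
  split_ifs <;> push_cast <;> ring

theorem form_simpleRoot_self (i : ι) : Q.form (simpleRoot i) (simpleRoot i) = 2 := by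
  simp [form_simpleRoot, edges, Q.arrows_self]

theorem form_simpleRoot_of_ne {i j : ι} (h : i ≠ j) :
    Q.form (simpleRoot i) (simpleRoot j) = -(Q.edges i j : ℤ) := by
  simp [form_simpleRoot, h]

theorem form_eq_sum (x y : ι → ℤ) : Q.form x y = ∑ i, x i * Q.form (simpleRoot i) y := by
  conv_lhs => rw [← Finset.univ_sum_single x, map_sum, LinearMap.sum_apply]
  refine Finset.sum_congr rfl fun i _ => ?_
  rw [← smul_eq_mul, ← LinearMap.smul_apply, ← map_smul, ← Pi.single_smul, smul_eq_mul, mul_one]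

theorem form_simpleRoot_nonpos {x : ι → ℤ} (hx : 0 ≤ x) {i : ι} (hi : x i = 0) :
    Q.form (simpleRoot i) x ≤ 0 := by
  rw [form_comm, form_eq_sum]
  refine Finset.sum_nonpos fun j _ => ?_
  obtain rfl | hne := eq_or_ne j i
  · rw [hi, zero_mul]
  · rw [form_simpleRoot_of_ne Q hne]
    exact mul_nonpos_of_nonneg_of_nonpos (hx j) (by simp)

theorem form_self_nonpos {x : ι → ℤ} (hx : 0 ≤ x) (hanti : ∀ i, Q.form (simpleRoot i) x ≤ 0) :
    Q.form x x ≤ 0 := by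
  rw [form_eq_sum]
  exact Finset.sum_nonpos fun i _ => mul_nonpos_of_nonneg_of_nonpos (hx i) (hanti i)

theorem form_eq_zero_of_edges_eq_zero {x y : ι → ℤ}
    (h : ∀ i j, x i ≠ 0 → y j ≠ 0 → i ≠ j ∧ Q.edges i j = 0) : Q.form x y = 0 := by
  rw [form_eq_sum]
  refine Finset.sum_eq_zero fun i _ => ?_
  by_cases hi : x i = 0
  · rw [hi, zero_mul]
  rw [form_comm, form_eq_sum, Finset.sum_eq_zero, mul_zero]
  intro j _
  by_cases hj : y j = 0
  · rw [hj, zero_mul]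
  obtain ⟨hne, hedges⟩ := h i j hi hj
  rw [form_simpleRoot_of_ne Q hne.symm, edges_comm, hedges, Nat.cast_zero, neg_zero, mul_zero]

/-- The reflection `x ↦ x - (εᵢ, x) εᵢ`. -/
def simpleReflection (i : ι) : (ι → ℤ) ≃ₗ[ℤ] (ι → ℤ) :=
  Module.reflection (Q.form_simpleRoot_self i)

theorem simpleReflection_apply (i : ι) (x : ι → ℤ) :
    Q.simpleReflection i x = x - Q.form (simpleRoot i) x • simpleRoot i := rfl

theorem simpleReflection_simpleReflection (i : ι) (x : ι → ℤ) :
    Q.simpleReflection i (Q.simpleReflection i x) = x :=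
  Module.involutive_reflection (Q.form_simpleRoot_self i) x

theorem simpleReflection_apply_of_ne {i j : ι} (h : j ≠ i) (x : ι → ℤ) :
    Q.simpleReflection i x j = x j := by
  simp [simpleReflection_apply, h]

theorem simpleReflection_simpleRoot_self (i : ι) :
    Q.simpleReflection i (simpleRoot i) = -simpleRoot i :=
  Module.reflection_apply_self (Q.form_simpleRoot_self i)

theorem simpleReflection_simpleRoot_of_ne {i j : ι} (h : i ≠ j) :
    Q.simpleReflection i (simpleRoot j) = simpleRoot j + (Q.edges i j : ℤ) • simpleRoot i := by
  rw [simpleReflection_apply, form_simpleRoot_of_ne Q h]; module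

theorem simpleReflection_lt {i : ι} {x : ι → ℤ} (h : 0 < Q.form (simpleRoot i) x) :
    Q.simpleReflection i x < x :=
  sub_lt_self x (smul_pos h ((simpleRoot_nonneg i).lt_of_ne (simpleRoot_ne_zero i).symm))

theorem form_simpleReflection (i : ι) (x y : ι → ℤ) :
    Q.form (Q.simpleReflection i x) (Q.simpleReflection i y) = Q.form x y := by
  simp only [simpleReflection_apply, map_sub, map_smul, LinearMap.sub_apply, LinearMap.smul_apply,
    smul_eq_mul, form_simpleRoot_self, form_comm Q x (simpleRoot i)]
  ring

/-- The Weyl group of the quiver as a Coxeter system. -/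
def weylSystem : CoxeterSystem Q.coxeterMatrix Q.coxeterMatrix.Group :=
  Q.coxeterMatrix.toCoxeterSystem

theorem isLiftable_simpleReflection : Q.coxeterMatrix.IsLiftable Q.simpleReflection := by
  intro i j
  ext1 x
  obtain rfl | hij := eq_or_ne i j
  · simp [simpleReflection_simpleReflection]
  have hform := form_simpleRoot_of_ne Q hij
  have hform' := form_simpleRoot_of_ne Q hij.symm
  rw [edges_comm] at hform'
  rw [coxeterMatrix_apply, if_neg hij]
  split_ifs with hzero hone
  · simp only [pow_two, LinearEquiv.mul_apply, LinearEquiv.coe_one, id,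
      simpleReflection_apply, map_sub, map_smul, form_simpleRoot_self, hform, hform', hzero]
    module
  · simp only [pow_succ, pow_zero, one_mul, LinearEquiv.mul_apply, LinearEquiv.coe_one, id,
      simpleReflection_apply, map_sub, map_smul, form_simpleRoot_self, hform, hform', hone]
    module
  · rw [pow_zero]

/-- The action of the Weyl group on `ℤ^ι`. -/
def weylRep : Q.coxeterMatrix.Group →* ((ι → ℤ) ≃ₗ[ℤ] (ι → ℤ)) :=
  Q.weylSystem.lift ⟨Q.simpleReflection, Q.isLiftable_simpleReflection⟩

theorem weylRep_simple (i : ι) : Q.weylRep (Q.weylSystem.simple i) = Q.simpleReflection i :=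
  Q.weylSystem.lift_apply_simple Q.isLiftable_simpleReflection i

theorem weylRep_mul_simple_simpleReflection (w : Q.coxeterMatrix.Group) (i : ι) (x : ι → ℤ) :
    Q.weylRep (w * Q.weylSystem.simple i) (Q.simpleReflection i x) = Q.weylRep w x := by
  rw [map_mul, weylRep_simple, LinearEquiv.mul_apply, simpleReflection_simpleReflection]

theorem form_weylRep (w : Q.coxeterMatrix.Group) (x y : ι → ℤ) :
    Q.form (Q.weylRep w x) (Q.weylRep w y) = Q.form x y := by
  induction w using Q.weylSystem.simple_induction_left with
  | one => rw [map_one]; rfl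
  | mul_simple_left w i ih =>
    rw [map_mul, weylRep_simple, LinearEquiv.mul_apply, LinearEquiv.mul_apply,
      form_simpleReflection, ih]

section Positivity

variable {Q} {w : Q.coxeterMatrix.Group} {i j : ι}

/-- Splitting right descents off `w`, alternately `sⱼ` and `sᵢ`, replaces the coefficients
`(x, y)` by `(c x - y, x)` with `c = Q.edges i j`, which preserves `0 ≤ y ≤ x` since `2 ≤ c`. -/
theorem weylRep_add_nonneg_of_two_le_edges {n : ℕ}
    (ih : ∀ v i, Q.weylSystem.length v < n → ¬ Q.weylSystem.IsRightDescent v i →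
      0 ≤ Q.weylRep v (simpleRoot i))
    (hw : Q.weylSystem.length w < n) (hij : i ≠ j) (hedges : 2 ≤ Q.edges i j)
    (hi : ¬ Q.weylSystem.IsRightDescent w i) {x y : ℤ} (hy : 0 ≤ y) (hyx : y ≤ x) :
    0 ≤ Q.weylRep w (x • simpleRoot i + y • simpleRoot j) := by
  induction hlen : Q.weylSystem.length w using Nat.strong_induction_on
    generalizing w i j x y with
  | h m rec =>
  by_cases hj : Q.weylSystem.IsRightDescent w j
  · have hlt := Q.weylSystem.isRightDescent_iff.1 hj
    have hnonneg := rec _ (by omega) (by omega) hij.symm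
      (by rwa [edges_comm])
      (Q.weylSystem.isRightDescent_iff_not_isRightDescent_mul.1 hj) (hy.trans hyx)
      (show x ≤ Q.edges i j * x - y by nlinarith) rfl
    rw [← weylRep_mul_simple_simpleReflection Q w j]
    convert hnonneg using 2
    rw [map_add, map_smul, map_smul, simpleReflection_simpleRoot_self,
      simpleReflection_simpleRoot_of_ne Q hij.symm, edges_comm]
    module
  · rw [map_add, map_smul, map_smul]
    exact add_nonneg (smul_nonneg (hy.trans hyx) (ih w i hw hi)) (smul_nonneg hy (ih w j hw hj))

theorem weylRep_add_nonneg_of_edges_eq_one {n : ℕ}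
    (ih : ∀ v i, Q.weylSystem.length v < n → ¬ Q.weylSystem.IsRightDescent v i →
      0 ≤ Q.weylRep v (simpleRoot i))
    (hw : Q.weylSystem.length w ≤ n) (hij : i ≠ j) (hedges : Q.edges i j = 1)
    (hi : ¬ Q.weylSystem.IsRightDescent w i) (hj : Q.weylSystem.IsRightDescent w j)
    (hji : Q.weylSystem.IsRightDescent (w * Q.weylSystem.simple j) i) :
    0 ≤ Q.weylRep w (simpleRoot i) := by
  have hlt := Q.weylSystem.isRightDescent_iff.1 hj
  have hlt' := Q.weylSystem.isRightDescent_iff.1 hji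
  have hM : Q.coxeterMatrix i j = 3 := by rw [coxeterMatrix_apply, if_neg hij]; simp [hedges]
  have hnonneg := ih _ j (by omega)
    (not_isRightDescent_mul_simple_of_M_eq_three Q.weylSystem hM hi hj hji)
  rw [← weylRep_mul_simple_simpleReflection Q w j,
    ← weylRep_mul_simple_simpleReflection Q _ i]
  convert hnonneg using 2
  rw [simpleReflection_simpleRoot_of_ne Q hij.symm, edges_comm, hedges, Nat.cast_one, one_smul,
    map_add, simpleReflection_simpleRoot_self, simpleReflection_simpleRoot_of_ne Q hij, hedges]
  push_cast
  module

theorem weylRep_simpleRoot_nonneg (hi : ¬ Q.weylSystem.IsRightDescent w i) :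
    0 ≤ Q.weylRep w (simpleRoot i) := by
  induction hlen : Q.weylSystem.length w using Nat.strong_induction_on generalizing w i with
  | h n rec =>
  have ih v i (hv : Q.weylSystem.length v < n) (hi : ¬ Q.weylSystem.IsRightDescent v i) :
      0 ≤ Q.weylRep v (simpleRoot i) := rec _ hv hi rfl
  obtain rfl | hw := eq_or_ne w 1
  · rw [map_one]; exact simpleRoot_nonneg i
  obtain ⟨j, hj⟩ := Q.weylSystem.exists_rightDescent_of_ne_one hw
  have hij : i ≠ j := by rintro rfl; exact hi hj
  have hlt := Q.weylSystem.isRightDescent_iff.1 hj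
  have hjj := Q.weylSystem.isRightDescent_iff_not_isRightDescent_mul.1 hj
  have hreflect : Q.simpleReflection j (simpleRoot i) =
      (Q.edges j i : ℤ) • simpleRoot j + (1 : ℤ) • simpleRoot i := by
    rw [simpleReflection_simpleRoot_of_ne Q hij.symm, one_smul, add_comm]
  by_cases hji : Q.weylSystem.IsRightDescent (w * Q.weylSystem.simple j) i
  · obtain hedges | hedges | hedges : Q.edges j i = 0 ∨ Q.edges j i = 1 ∨ 2 ≤ Q.edges j i := by
      omega
    · refine absurd hji (not_isRightDescent_mul_simple_of_M_eq_two Q.weylSystem ?_ hi hj)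
      rw [coxeterMatrix_apply, if_neg hij, edges_comm, if_pos hedges]
    · exact weylRep_add_nonneg_of_edges_eq_one ih hlen.le hij (by rwa [edges_comm]) hi hj hji
    · rw [← weylRep_mul_simple_simpleReflection Q w j, hreflect]
      exact weylRep_add_nonneg_of_two_le_edges ih (by omega) hij.symm hedges hjj zero_le_one
        (by omega)
  · rw [← weylRep_mul_simple_simpleReflection Q w j, hreflect, map_add, map_smul, map_smul]
    exact add_nonneg (smul_nonneg (by positivity) (ih _ _ (by omega) hjj))
      (smul_nonneg zero_le_one (ih _ _ (by omega) hji))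

theorem weylRep_simpleRoot_nonneg_or_nonpos (w : Q.coxeterMatrix.Group) (i : ι) :
    0 ≤ Q.weylRep w (simpleRoot i) ∨ Q.weylRep w (simpleRoot i) ≤ 0 := by
  by_cases hi : Q.weylSystem.IsRightDescent w i
  · right
    rw [← weylRep_mul_simple_simpleReflection Q w i, simpleReflection_simpleRoot_self, map_neg,
      neg_nonpos]
    exact weylRep_simpleRoot_nonneg (Q.weylSystem.isRightDescent_iff_not_isRightDescent_mul.1 hi)
  · exact .inl (weylRep_simpleRoot_nonneg hi)

theorem le_weylRep {x : ι → ℤ} (hx : ∀ i, Q.form (simpleRoot i) x ≤ 0)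
    (w : Q.coxeterMatrix.Group) : x ≤ Q.weylRep w x := by
  induction hlen : Q.weylSystem.length w using Nat.strong_induction_on generalizing w with
  | h n ih =>
  obtain rfl | hw := eq_or_ne w 1
  · rw [map_one]; exact le_rfl
  obtain ⟨i, hi⟩ := Q.weylSystem.exists_rightDescent_of_ne_one hw
  have hlt := Q.weylSystem.isRightDescent_iff.1 hi
  set v := w * Q.weylSystem.simple i
  have hpos : 0 ≤ Q.weylRep v (simpleRoot i) :=
    weylRep_simpleRoot_nonneg (Q.weylSystem.isRightDescent_iff_not_isRightDescent_mul.1 hi)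
  calc x ≤ Q.weylRep v x := ih _ (by omega) v rfl
    _ ≤ Q.weylRep v x - Q.form (simpleRoot i) x • Q.weylRep v (simpleRoot i) :=
        le_sub_self_iff _ |>.2 (smul_nonpos_of_nonpos_of_nonneg (hx i) hpos)
    _ = Q.weylRep w x := by
        rw [← weylRep_mul_simple_simpleReflection Q w i, simpleReflection_apply, map_sub, map_smul]

end Positivity

/-- The fundamental region of the root system. -/
structure IsFundamental (x : ι → ℤ) : Prop where
  ne_zero : x ≠ 0
  nonneg : 0 ≤ x
  isConnected : Q.IsConnected x
  form_simpleRoot_nonpos : ∀ i, Q.form (simpleRoot i) x ≤ 0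

/-- Real roots: the Weyl translates of the simple roots. -/
def IsRealRoot (x : ι → ℤ) : Prop := ∃ w i, x = Q.weylRep w (simpleRoot i)

/-- Imaginary roots: up to sign, the Weyl translates of the elements of the fundamental region. -/
def IsImaginaryRoot (x : ι → ℤ) : Prop :=
  ∃ w γ, Q.IsFundamental γ ∧ (x = Q.weylRep w γ ∨ x = -Q.weylRep w γ)

/-- The roots of the quiver. -/
def IsRoot (x : ι → ℤ) : Prop := Q.IsRealRoot x ∨ Q.IsImaginaryRoot x

/-- The positive roots of the quiver. -/
structure IsPositiveRoot (x : ι → ℤ) : Prop where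
  isRoot : Q.IsRoot x
  nonneg : 0 ≤ x

section Roots

variable {Q} {i : ι} {s : Set ι} {x : ι → ℤ}

theorem IsRoot.ne_zero (h : Q.IsRoot x) : x ≠ 0 := by
  rcases h with ⟨w, i, rfl⟩ | ⟨w, γ, hγ, rfl | rfl⟩
  · exact (Q.weylRep w).map_ne_zero_iff.2 (simpleRoot_ne_zero i)
  · exact (Q.weylRep w).map_ne_zero_iff.2 hγ.ne_zero
  · exact neg_ne_zero.2 ((Q.weylRep w).map_ne_zero_iff.2 hγ.ne_zero)

theorem IsRoot.form_self (h : Q.IsRoot x) : Q.form x x = 2 ∨ Q.form x x ≤ 0 := by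
  rcases h with ⟨w, i, rfl⟩ | ⟨w, γ, hγ, rfl | rfl⟩
  · exact .inl ((Q.form_weylRep w _ _).trans (Q.form_simpleRoot_self i))
  · rw [form_weylRep]
    exact .inr (Q.form_self_nonpos hγ.nonneg hγ.form_simpleRoot_nonpos)
  · rw [map_neg, LinearMap.map_neg₂, neg_neg, form_weylRep]
    exact .inr (Q.form_self_nonpos hγ.nonneg hγ.form_simpleRoot_nonpos)

theorem IsRoot.nonneg_or_nonpos (h : Q.IsRoot x) : 0 ≤ x ∨ x ≤ 0 := by
  rcases h with ⟨w, i, rfl⟩ | ⟨w, γ, hγ, rfl | rfl⟩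
  · exact weylRep_simpleRoot_nonneg_or_nonpos w i
  · exact .inl (hγ.nonneg.trans (le_weylRep hγ.form_simpleRoot_nonpos w))
  · exact .inr (neg_nonpos.2 (hγ.nonneg.trans (le_weylRep hγ.form_simpleRoot_nonpos w)))

theorem IsRoot.simpleReflection (h : Q.IsRoot x) (i : ι) : Q.IsRoot (Q.simpleReflection i x) := by
  have hmul (w) (y : ι → ℤ) : Q.simpleReflection i (Q.weylRep w y) =
      Q.weylRep (Q.weylSystem.simple i * w) y := by
    rw [map_mul, weylRep_simple, LinearEquiv.mul_apply]
  rcases h with ⟨w, j, rfl⟩ | ⟨w, γ, hγ, rfl | rfl⟩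
  · exact .inl ⟨_, j, hmul w _⟩
  · exact .inr ⟨_, γ, hγ, .inl (hmul w _)⟩
  · exact .inr ⟨_, γ, hγ, .inr (by rw [map_neg, hmul])⟩

theorem isPositiveRoot_simpleRoot (i : ι) : Q.IsPositiveRoot (simpleRoot i) :=
  ⟨.inl ⟨1, i, by rw [map_one]; rfl⟩, simpleRoot_nonneg i⟩

theorem IsPositiveRoot.eq_simpleRoot (h : Q.IsPositiveRoot x)
    (hx : Q.simpleReflection i x ≤ 0) : x = simpleRoot i := by
  have hzero (j) (hj : j ≠ i) : x j = 0 :=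
    le_antisymm (simpleReflection_apply_of_ne Q hj x ▸ hx j) (h.nonneg j)
  have hsmul : x = x i • simpleRoot i := by
    ext j
    obtain rfl | hj := eq_or_ne j i
    · simp
    · simp [hj, hzero j hj]
  have hne : x i ≠ 0 := fun hi => h.isRoot.ne_zero (by rw [hsmul, hi, zero_smul])
  have hpos : 0 < x i := (h.nonneg i).lt_of_ne hne.symm
  have hform : Q.form x x = 2 * (x i * x i) := by
    conv_lhs => rw [hsmul]
    rw [map_smul, LinearMap.map_smul₂, form_simpleRoot_self, smul_eq_mul, smul_eq_mul]
    ring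
  have hone : x i = 1 := by rcases h.isRoot.form_self with h2 | h0 <;> nlinarith
  rw [hsmul, hone, one_smul]

theorem IsPositiveRoot.simpleReflection (h : Q.IsPositiveRoot x) (hne : x ≠ simpleRoot i) :
    Q.IsPositiveRoot (Q.simpleReflection i x) :=
  have hroot := h.isRoot.simpleReflection i
  ⟨hroot, hroot.nonneg_or_nonpos.resolve_right (mt h.eq_simpleRoot hne)⟩

theorem IsPositiveRoot.isFundamental (h : Q.IsPositiveRoot x)
    (hanti : ∀ i, Q.form (simpleRoot i) x ≤ 0) : Q.IsFundamental x := by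
  rcases h.isRoot with ⟨w, i, rfl⟩ | ⟨w, γ, hγ, hx | hx⟩
  · have hnonpos := Q.form_self_nonpos h.nonneg hanti
    rw [form_weylRep, form_simpleRoot_self] at hnonpos
    omega
  · have hle : x ≤ γ := by
      simpa [hx, ← LinearEquiv.mul_apply, ← map_mul] using le_weylRep hanti w⁻¹
    rwa [hle.antisymm (hx ▸ le_weylRep hγ.form_simpleRoot_nonpos w)]
  · have hle : 0 ≤ -x := by
      rw [hx, neg_neg]
      exact hγ.nonneg.trans (le_weylRep hγ.form_simpleRoot_nonpos w)
    exact absurd (le_antisymm (neg_nonneg.1 hle) h.nonneg) h.isRoot.ne_zero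

theorem Separates.form_indicator_compl (h : Q.Separates s x) {y : ι → ℤ}
    (hys : ∀ i, y i ≠ 0 → i ∈ s ∧ x i ≠ 0) : Q.form y (sᶜ.indicator x) = 0 := by
  refine form_eq_zero_of_edges_eq_zero Q fun i j hyi hj => ?_
  obtain ⟨hi, hxi⟩ := hys i hyi
  obtain ⟨hjs, hxj⟩ : j ∉ s ∧ x j ≠ 0 := by simpa using hj
  exact ⟨fun hij => hjs (hij ▸ hi), h i hi j hjs hxi hxj⟩

theorem IsConnected.of_simpleReflection (h : Q.IsConnected (Q.simpleReflection i x))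
    (hxi : x i ≠ 0) : Q.IsConnected x := by
  intro s hs
  wlog hi : i ∈ s generalizing s
  · simpa only [compl_compl, or_comm] using this sᶜ hs.compl hi
  have hcompl : sᶜ.indicator (Q.simpleReflection i x) = sᶜ.indicator x :=
    Set.indicator_congr fun j hj => simpleReflection_apply_of_ne Q (by rintro rfl; exact hj hi) x
  have hs' : Q.Separates s (Q.simpleReflection i x) := hs.of_support_subset fun j hj => by
    rwa [simpleReflection_apply_of_ne Q (by rintro rfl; exact hxi hj)]
  refine .inr ((h s hs').elim (fun hzero => ?_) fun hzero => hcompl ▸ hzero)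
  have hfixed : Q.simpleReflection i (sᶜ.indicator x) = sᶜ.indicator x := by
    rw [simpleReflection_apply, hs.form_indicator_compl, zero_smul, sub_zero]
    intro j hj
    obtain rfl : j = i := by by_contra hji; simp [hji] at hj
    exact ⟨hi, hxi⟩
  have hreflect : Q.simpleReflection i x = sᶜ.indicator x := by
    simpa only [hzero, hcompl, zero_add] using
      (Set.indicator_self_add_compl s (Q.simpleReflection i x)).symm
  have hx : x = sᶜ.indicator x :=
    (Q.simpleReflection_simpleReflection i x).symm.trans (by rw [hreflect, hfixed])
  exact absurd (by rw [hx]; simp [hi]) hxi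

theorem IsPositiveRoot.isConnected (h : Q.IsPositiveRoot x) : Q.IsConnected x := by
  refine induction_nonneg (P := fun x => Q.IsPositiveRoot x → Q.IsConnected x)
    (fun x hx ih h => ?_) h.nonneg h
  by_cases hanti : ∀ i, Q.form (simpleRoot i) x ≤ 0
  · exact (h.isFundamental hanti).isConnected
  push Not at hanti
  obtain ⟨i, hi⟩ := hanti
  obtain rfl | hne := eq_or_ne x (simpleRoot i)
  · exact Q.isConnected_simpleRoot i
  have hreflect := h.simpleReflection hne
  exact (ih _ hreflect.nonneg (simpleReflection_lt Q hi) hreflect).of_simpleReflection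
    fun hxi => hi.not_ge (form_simpleRoot_nonpos Q hx hxi)

end Roots

section RootCone

/-- The positive roots in a subgroup `M` of `ℤ^ι`. -/
def positiveRootsIn (M : AddSubgroup (ι → ℤ)) : Set (ι → ℤ) := {x | Q.IsPositiveRoot x ∧ x ∈ M}

/-- The monoid of finite sums of positive roots in `M`. -/
def rootCone (M : AddSubgroup (ι → ℤ)) : AddSubmonoid (ι → ℤ) :=
  AddSubmonoid.closure (Q.positiveRootsIn M)

/-- The preimage of `M` under a simple reflection. -/
def reflectedSubgroup (i : ι) (M : AddSubgroup (ι → ℤ)) : AddSubgroup (ι → ℤ) :=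
  M.comap (Q.simpleReflection i).toAddEquiv.toAddMonoidHom

/-- The numerical criterion for membership in `sigmaSet`: in every decomposition `x = β + (x - β)`
into nonzero elements of the root cone, the two summands satisfy `(β, x - β) ≤ -2`. -/
def SplitsNegatively (M : AddSubgroup (ι → ℤ)) (x : ι → ℤ) : Prop :=
  ∀ β, β ∈ Q.rootCone M → x - β ∈ Q.rootCone M → β ≠ 0 → x - β ≠ 0 → Q.form β (x - β) ≤ -2

/-- Crawley-Boevey's set `Σ` relative to `M`: the positive roots `x` in `M` such that `p` strictly
decreases in total whenever `x` is split into at least two positive roots in `M`. -/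
def sigmaSet (M : AddSubgroup (ι → ℤ)) : Set (ι → ℤ) :=
  {x | x ∈ Q.positiveRootsIn M ∧ ∀ s : Multiset (ι → ℤ), 2 ≤ s.card →
    (∀ γ ∈ s, γ ∈ Q.positiveRootsIn M) → s.sum = x → (s.map Q.p).sum < Q.p x}

variable {Q} {M M' : AddSubgroup (ι → ℤ)} {i : ι} {x : ι → ℤ}

theorem nonneg_of_mem_rootCone (hx : x ∈ Q.rootCone M) : 0 ≤ x :=
  (AddSubmonoid.closure_le (S := AddSubmonoid.nonneg (ι → ℤ))).2 (fun _ h => h.1.nonneg) hx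

theorem mem_of_mem_rootCone (hx : x ∈ Q.rootCone M) : x ∈ M :=
  (AddSubmonoid.closure_le (S := M.toAddSubmonoid)).2 (fun _ h => h.2) hx

theorem simpleRoot_mem_rootCone (hi : simpleRoot i ∈ M) : simpleRoot i ∈ Q.rootCone M :=
  AddSubmonoid.mem_closure_of_mem ⟨isPositiveRoot_simpleRoot i, hi⟩

theorem simpleReflection_mem_rootCone (hi : simpleRoot i ∉ M)
    (hM : ∀ y ∈ M, Q.simpleReflection i y ∈ M') (hx : x ∈ Q.rootCone M) :
    Q.simpleReflection i x ∈ Q.rootCone M' := by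
  induction hx using AddSubmonoid.closure_induction with
  | mem x hx =>
    refine AddSubmonoid.mem_closure_of_mem ⟨hx.1.simpleReflection ?_, hM x hx.2⟩
    rintro rfl
    exact hi hx.2
  | zero => rw [map_zero]; exact zero_mem _
  | add x y _ _ hx hy => rw [map_add]; exact add_mem hx hy

theorem simpleReflection_mem_rootCone_iff (hi : simpleRoot i ∉ M) :
    Q.simpleReflection i x ∈ Q.rootCone (Q.reflectedSubgroup i M) ↔ x ∈ Q.rootCone M := by
  have hmem (y) : y ∈ Q.reflectedSubgroup i M ↔ Q.simpleReflection i y ∈ M := Iff.rfl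
  constructor
  · have hi' : simpleRoot i ∉ Q.reflectedSubgroup i M := by
      rwa [hmem, simpleReflection_simpleRoot_self, neg_mem_iff]
    intro hx
    rw [← Q.simpleReflection_simpleReflection i x]
    exact simpleReflection_mem_rootCone hi' (fun y hy => (hmem y).1 hy) hx
  · exact simpleReflection_mem_rootCone hi fun y hy => by
      rwa [hmem, simpleReflection_simpleReflection]

theorem IsPositiveRoot.sub_simpleRoot_mem_rootCone (h : Q.IsPositiveRoot x) (hx : x ∈ M)
    (hi : simpleRoot i ∈ M) (hpos : 0 < Q.form (simpleRoot i) x) :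
    x - simpleRoot i ∈ Q.rootCone M := by
  obtain rfl | hne := eq_or_ne x (simpleRoot i)
  · rw [sub_self]; exact zero_mem _
  have hreflect : Q.simpleReflection i x ∈ Q.rootCone M :=
    AddSubmonoid.mem_closure_of_mem ⟨h.simpleReflection hne, sub_mem hx (zsmul_mem hi _)⟩
  obtain ⟨k, hk⟩ : ∃ k : ℕ, Q.form (simpleRoot i) x = k + 1 :=
    ⟨(Q.form (simpleRoot i) x - 1).toNat, by omega⟩
  have hsub : x - simpleRoot i = Q.simpleReflection i x + k • simpleRoot i := by
    rw [simpleReflection_apply, hk, ← natCast_zsmul]; module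
  rw [hsub]
  exact add_mem hreflect (nsmul_mem (simpleRoot_mem_rootCone hi) k)

theorem sub_simpleRoot_mem_rootCone (hi : simpleRoot i ∈ M) (hx : x ∈ Q.rootCone M)
    (hpos : 0 < Q.form (simpleRoot i) x) : x - simpleRoot i ∈ Q.rootCone M := by
  induction hx using AddSubmonoid.closure_induction with
  | mem x hx => exact hx.1.sub_simpleRoot_mem_rootCone hx.2 hi hpos
  | zero => rw [map_zero] at hpos; exact absurd hpos (lt_irrefl 0)
  | add x y hx hy ihx ihy =>
    rw [map_add] at hpos
    obtain hx' | hx' := lt_or_ge 0 (Q.form (simpleRoot i) x)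
    · rw [add_sub_right_comm]
      exact add_mem (ihx hx') hy
    · rw [add_sub_assoc]
      exact add_mem hx (ihy (by omega))

theorem indicator_mem_rootCone {s : Set ι} (hx : x ∈ Q.rootCone M) (hs : Q.Separates s x) :
    s.indicator x ∈ Q.rootCone M := by
  induction hx using AddSubmonoid.closure_induction with
  | mem x hx =>
    obtain h | h := hx.1.isConnected s hs
    · rw [h]; exact zero_mem _
    · have hself : s.indicator x = x := by
        simpa only [h, add_zero] using Set.indicator_self_add_compl s x
      rw [hself]
      exact AddSubmonoid.mem_closure_of_mem hx
  | zero => rw [Set.indicator_zero']; exact zero_mem _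
  | add x y hx hy ihx ihy =>
    have hsum (j) (hj : x j + y j = 0) : x j = 0 ∧ y j = 0 :=
      (add_eq_zero_iff_of_nonneg (nonneg_of_mem_rootCone hx j) (nonneg_of_mem_rootCone hy j)).1 hj
    rw [Set.indicator_add']
    exact add_mem (ihx (hs.of_support_subset fun j hj => (hsum j hj).1))
      (ihy (hs.of_support_subset fun j hj => (hsum j hj).2))

theorem SplitsNegatively.isConnected (h : Q.SplitsNegatively M x) (hx : x ∈ Q.rootCone M) :
    Q.IsConnected x := by
  intro s hs
  by_contra! hne
  have hsub : x - s.indicator x = sᶜ.indicator x := (Set.indicator_compl s x).symm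
  have hle := h _ (indicator_mem_rootCone hx hs)
    (hsub ▸ indicator_mem_rootCone hx hs.compl) hne.1 (hsub ▸ hne.2)
  have hform : Q.form (s.indicator x) (sᶜ.indicator x) = 0 :=
    hs.form_indicator_compl fun i hi => by simpa using hi
  rw [hsub, hform] at hle
  omega

theorem SplitsNegatively.eq_simpleRoot (h : Q.SplitsNegatively M x) (hx : x ∈ Q.rootCone M)
    (hi : simpleRoot i ∈ M) (hpos : 0 < Q.form (simpleRoot i) x) : x = simpleRoot i := by
  by_contra hne
  have hle := h _ (simpleRoot_mem_rootCone hi) (sub_simpleRoot_mem_rootCone hi hx hpos)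
    (simpleRoot_ne_zero i) (sub_ne_zero.2 hne)
  rw [map_sub, form_simpleRoot_self] at hle
  omega

theorem SplitsNegatively.simpleReflection (h : Q.SplitsNegatively M x) (hi : simpleRoot i ∉ M) :
    Q.SplitsNegatively (Q.reflectedSubgroup i M) (Q.simpleReflection i x) := by
  intro β hβ hxβ hβ0 hxβ0
  obtain ⟨β, rfl⟩ := (Q.simpleReflection i).surjective β
  rw [← map_sub, simpleReflection_mem_rootCone_iff hi] at hxβ
  rw [simpleReflection_mem_rootCone_iff hi] at hβ
  rw [← map_sub, LinearEquiv.map_ne_zero_iff] at hxβ0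
  rw [LinearEquiv.map_ne_zero_iff] at hβ0
  rw [← map_sub, form_simpleReflection]
  exact h β hβ hxβ hβ0 hxβ0

theorem SplitsNegatively.isRoot (h : Q.SplitsNegatively M x) (hx : x ∈ Q.rootCone M)
    (hx0 : x ≠ 0) : Q.IsRoot x := by
  refine induction_nonneg (P := fun x => ∀ M, Q.SplitsNegatively M x → x ∈ Q.rootCone M →
    x ≠ 0 → Q.IsRoot x) (fun x hnonneg ih M h hx hx0 => ?_) (nonneg_of_mem_rootCone hx) M h hx hx0
  by_cases hanti : ∀ i, Q.form (simpleRoot i) x ≤ 0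
  · exact .inr ⟨1, x, ⟨hx0, hnonneg, h.isConnected hx, hanti⟩, .inl (by rw [map_one]; rfl)⟩
  push Not at hanti
  obtain ⟨i, hpos⟩ := hanti
  by_cases hi : simpleRoot i ∈ M
  · rw [h.eq_simpleRoot hx hi hpos]
    exact (isPositiveRoot_simpleRoot i).isRoot
  have hreflect := (simpleReflection_mem_rootCone_iff hi).2 hx
  have hroot := ih _ (nonneg_of_mem_rootCone hreflect) (simpleReflection_lt Q hpos) _
    (h.simpleReflection hi) hreflect ((Q.simpleReflection i).map_ne_zero_iff.2 hx0)
  rw [← Q.simpleReflection_simpleReflection i x]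
  exact hroot.simpleReflection i

theorem SplitsNegatively.mem_positiveRootsIn (h : Q.SplitsNegatively M x)
    (hx : x ∈ Q.rootCone M) (hx0 : x ≠ 0) : x ∈ Q.positiveRootsIn M :=
  ⟨⟨h.isRoot hx hx0, nonneg_of_mem_rootCone hx⟩, mem_of_mem_rootCone hx⟩

/-- Split `x` as long as some splitting has `(β, x - β) ≥ -1`, which does not decrease the total
value of `p`. -/
theorem exists_multiset_sum_eq_p_le (hx : x ∈ Q.rootCone M) (hx0 : x ≠ 0) :
    ∃ s : Multiset (ι → ℤ), s ≠ 0 ∧ (∀ γ ∈ s, γ ∈ Q.positiveRootsIn M) ∧ s.sum = x ∧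
      Q.p x ≤ (s.map Q.p).sum := by
  refine induction_nonneg (P := fun x => x ∈ Q.rootCone M → x ≠ 0 → ∃ s : Multiset (ι → ℤ),
    s ≠ 0 ∧ (∀ γ ∈ s, γ ∈ Q.positiveRootsIn M) ∧ s.sum = x ∧ Q.p x ≤ (s.map Q.p).sum)
    (fun x _ ih hx hx0 => ?_) (nonneg_of_mem_rootCone hx) hx hx0
  by_cases h : Q.SplitsNegatively M x
  · exact ⟨{x}, by simp, by simpa using h.mem_positiveRootsIn hx hx0, by simp, by simp⟩
  unfold SplitsNegatively at h
  push Not at h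
  obtain ⟨β, hβ, hγ, hβ0, hγ0, hform⟩ := h
  have hβpos := (nonneg_of_mem_rootCone hβ).lt_of_ne hβ0.symm
  have hγpos := (nonneg_of_mem_rootCone hγ).lt_of_ne hγ0.symm
  obtain ⟨s, hs, hsroots, hssum, hsp⟩ := ih β hβpos.le (sub_pos.1 hγpos) hβ hβ0
  obtain ⟨t, -, htroots, htsum, htp⟩ := ih (x - β) hγpos.le (sub_lt_self x hβpos) hγ hγ0
  refine ⟨s + t, by simp [hs], fun γ hγ => (Multiset.mem_add.1 hγ).elim (hsroots γ) (htroots γ),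
    by rw [Multiset.sum_add, hssum, htsum, add_sub_cancel], ?_⟩
  have hp := Q.p_add β (x - β)
  rw [add_sub_cancel] at hp
  rw [Multiset.map_add, Multiset.sum_add]
  omega

theorem splitsNegatively_of_mem_sigmaSet (hx : x ∈ Q.sigmaSet M) : Q.SplitsNegatively M x := by
  intro β hβ hγ hβ0 hγ0
  obtain ⟨s, hs, hsroots, hssum, hsp⟩ := exists_multiset_sum_eq_p_le hβ hβ0
  obtain ⟨t, ht, htroots, htsum, htp⟩ := exists_multiset_sum_eq_p_le hγ hγ0
  have hcard : 2 ≤ (s + t).card := by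
    have := Multiset.card_pos.2 hs
    have := Multiset.card_pos.2 ht
    rw [Multiset.card_add]
    omega
  have hlt := hx.2 (s + t) hcard
    (fun γ hγ => (Multiset.mem_add.1 hγ).elim (hsroots γ) (htroots γ))
    (by rw [Multiset.sum_add, hssum, htsum, add_sub_cancel])
  have hp := Q.p_add β (x - β)
  rw [add_sub_cancel] at hp
  rw [Multiset.map_add, Multiset.sum_add] at hlt
  omega

theorem sum_map_form_sub (s : Multiset (ι → ℤ)) (x : ι → ℤ) :
    (s.map fun γ => Q.form γ (x - γ)).sum =
      Q.form s.sum x - 2 * s.card + 2 * (s.map Q.p).sum := by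
  induction s using Multiset.induction with
  | empty => simp
  | cons γ s ih =>
    rw [Multiset.map_cons, Multiset.sum_cons, ih, Multiset.sum_cons, Multiset.map_cons,
      Multiset.sum_cons, Multiset.card_cons, map_sub, form_self, map_add, LinearMap.add_apply]
    push_cast
    ring

theorem SplitsNegatively.sum_map_p_lt {s : Multiset (ι → ℤ)}
    (h : Q.SplitsNegatively M s.sum) (hs : 2 ≤ s.card)
    (hroots : ∀ γ ∈ s, γ ∈ Q.positiveRootsIn M) : (s.map Q.p).sum < Q.p s.sum := by
  have hle (γ) (hγ : γ ∈ s) : Q.form γ (s.sum - γ) ≤ -2 := by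
    have hrest : s.sum - γ = (s.erase γ).sum := sub_eq_of_eq_add' (Multiset.sum_erase hγ).symm
    have hroots' (δ) (hδ : δ ∈ s.erase γ) := hroots δ (Multiset.mem_of_mem_erase hδ)
    obtain ⟨δ, hδ⟩ : ∃ δ, δ ∈ s.erase γ := Multiset.card_pos_iff_exists_mem.1 (by
      rw [Multiset.card_erase_of_mem hγ, Nat.pred_eq_sub_one]; omega)
    have hδpos : 0 < δ := (hroots' δ hδ).1.nonneg.lt_of_ne (hroots' δ hδ).1.isRoot.ne_zero.symm
    refine h γ (AddSubmonoid.mem_closure_of_mem (hroots γ hγ)) ?_ (hroots γ hγ).1.isRoot.ne_zero ?_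
    · rw [hrest]
      exact multiset_sum_mem _ fun δ hδ => AddSubmonoid.mem_closure_of_mem (hroots' δ hδ)
    · rw [hrest]
      exact (hδpos.trans_le
        (Multiset.single_le_sum (fun δ hδ => (hroots' δ hδ).1.nonneg) δ hδ)).ne'
  have hsum := Multiset.sum_map_le_sum_map _ (fun _ => (-2 : ℤ)) hle
  rw [sum_map_form_sub, form_self, Multiset.map_const', Multiset.sum_replicate,
    nsmul_eq_mul] at hsum
  omega

theorem SplitsNegatively.mem_sigmaSet (h : Q.SplitsNegatively M x) (hx : x ∈ Q.rootCone M)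
    (hx0 : x ≠ 0) : x ∈ Q.sigmaSet M :=
  ⟨h.mem_positiveRootsIn hx hx0, fun _ hcard hroots hsum =>
    hsum ▸ (hsum ▸ h).sum_map_p_lt hcard hroots⟩

end RootCone

end LoopFreeQuiver

theorem statement9_general {ι : Type*} [DecidableEq ι] [Fintype ι] (Q : LoopFreeQuiver ι)
    (M : AddSubgroup (ι → ℤ)) (α : ι → ℤ) :
    α ∈ Q.sigmaSet M ↔ α ≠ 0 ∧ α ∈ Q.rootCone M ∧ Q.SplitsNegatively M α :=
  ⟨fun h => ⟨h.1.1.isRoot.ne_zero, AddSubmonoid.mem_closure_of_mem h.1,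
    LoopFreeQuiver.splitsNegatively_of_mem_sigmaSet h⟩, fun h => h.2.2.mem_sigmaSet h.2.1 h.1⟩

section Setup

variable (S : Setup)

/-- The quiver `Q` attached to the normal forms. It has no loops. -/
def quiver : LoopFreeQuiver (V S) where
  arrows := arr S
  arrows_self a := by rcases a with ⟨i, j⟩ | ⟨i, j, κ⟩ <;> simp [arr]

theorem eform_eq_eulerForm (β γ : V S → ℤ) : eform S β γ = (quiver S).eulerForm β γ := by
  rw [LoopFreeQuiver.eulerForm, Matrix.toBilin'_apply', Matrix.sub_mulVec, Matrix.one_mulVec,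
    dotProduct_sub]
  simp only [eform, quiver, dotProduct, Matrix.mulVec, Matrix.of_apply, Finset.mul_sum,
    mul_left_comm (β _), mul_assoc]

theorem bform_eq_form (β γ : V S → ℤ) : bform S β γ = (quiver S).form β γ := by
  rw [bform, eform_eq_eulerForm, eform_eq_eulerForm, LoopFreeQuiver.form_apply]

theorem pform_eq_p : pform S = (quiver S).p := by
  ext β
  rw [pform, qform, eform_eq_eulerForm, LoopFreeQuiver.p]

theorem eps_eq_simpleRoot (a : V S) : eps S a = LoopFreeQuiver.simpleRoot a := by
  ext b
  rw [eps, LoopFreeQuiver.simpleRoot, Pi.single_apply]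

theorem refl1_eq_simpleReflection (a : V S) (β : V S → ℤ) :
    refl1 S a β = (quiver S).simpleReflection a β := by
  ext b
  rw [refl1, bform_eq_form, eps_eq_simpleRoot, LoopFreeQuiver.simpleReflection_apply,
    LoopFreeQuiver.form_comm]
  rfl

theorem reflList_eq_weylRep (l : List (V S)) (β : V S → ℤ) :
    reflList S l β = (quiver S).weylRep ((quiver S).weylSystem.wordProd l) β := by
  induction l with
  | nil => rw [CoxeterSystem.wordProd_nil, map_one]; rfl
  | cons a l ih =>
    rw [CoxeterSystem.wordProd_cons, map_mul, LinearEquiv.mul_apply, ← ih,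
      LoopFreeQuiver.weylRep_simple, ← refl1_eq_simpleReflection]
    rfl

theorem exists_reflList_eq (w : (quiver S).coxeterMatrix.Group) :
    ∃ l : List (V S), ∀ β, reflList S l β = (quiver S).weylRep w β := by
  obtain ⟨l, rfl⟩ := (quiver S).weylSystem.wordProd_surjective w
  exact ⟨l, reflList_eq_weylRep S l⟩

theorem connSupp_iff_isConnected (β : V S → ℤ) : connSupp S β ↔ (quiver S).IsConnected β :=
  (LoopFreeQuiver.isConnected_iff_reflTransGen (Q := quiver S)).symm

theorem fund_iff_isFundamental (β : V S → ℤ) : fund S β ↔ (quiver S).IsFundamental β := by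
  simp only [fund, connSupp_iff_isConnected, bform_eq_form, eps_eq_simpleRoot,
    LoopFreeQuiver.form_comm _ β]
  exact ⟨fun h => ⟨h.1, h.2.1, h.2.2.1, h.2.2.2⟩, fun h => ⟨h.1, h.2, h.3, h.4⟩⟩

theorem isRealRoot_iff (β : V S → ℤ) : isRealRoot S β ↔ (quiver S).IsRealRoot β := by
  constructor
  · rintro ⟨l, a, rfl⟩
    exact ⟨_, a, by rw [reflList_eq_weylRep, eps_eq_simpleRoot]⟩
  · rintro ⟨w, a, rfl⟩
    obtain ⟨l, hl⟩ := exists_reflList_eq S w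
    exact ⟨l, a, by rw [hl, eps_eq_simpleRoot]⟩

theorem isImagRoot_iff (β : V S → ℤ) : isImagRoot S β ↔ (quiver S).IsImaginaryRoot β := by
  simp only [isImagRoot, fund_iff_isFundamental]
  constructor
  · rintro ⟨l, γ, hγ | hγ, rfl⟩
    · exact ⟨_, γ, hγ, .inl (reflList_eq_weylRep S l γ)⟩
    · exact ⟨_, -γ, hγ, .inr (by rw [map_neg, neg_neg, reflList_eq_weylRep])⟩
  · rintro ⟨w, γ, hγ, rfl | rfl⟩ <;> obtain ⟨l, hl⟩ := exists_reflList_eq S w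
    · exact ⟨l, γ, .inl hγ, (hl γ).symm⟩
    · exact ⟨l, -γ, .inr (by rwa [neg_neg]), by rw [hl, map_neg]⟩

theorem isPosRoot_iff_isPositiveRoot (β : V S → ℤ) :
    isPosRoot S β ↔ (quiver S).IsPositiveRoot β := by
  rw [isPosRoot, isRoot, isRealRoot_iff, isImagRoot_iff]
  exact ⟨fun h => ⟨h.1, h.2⟩, fun h => ⟨h.1, h.2⟩⟩

variable (μ : V S → ℂ)

/-- The subgroup `L ∩ {β | β · μ = 0}` of `ℤ^{Q₀}`, so that `R̃⁺_μ` is the set of positive roots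
in it. -/
def latticePerp : AddSubgroup (V S → ℤ) where
  carrier := {β | inL S β ∧ dotC S β μ = 0}
  zero_mem' := ⟨fun i _ => by simp, by simp [dotC]⟩
  add_mem' {β γ} hβ hγ := by
    refine ⟨fun i hi => ?_, ?_⟩
    · simp only [Pi.add_apply, Finset.sum_add_distrib, hβ.1 i hi, hγ.1 i hi]
    · have hadd : dotC S (β + γ) μ = dotC S β μ + dotC S γ μ := by
        simp [dotC, add_mul, Finset.sum_add_distrib]
      rw [hadd, hβ.2, hγ.2, add_zero]
  neg_mem' {β} hβ := by
    refine ⟨fun i hi => ?_, ?_⟩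
    · simp only [Pi.neg_apply, Finset.sum_neg_distrib, hβ.1 i hi]
    · have hneg : dotC S (-β) μ = -dotC S β μ := by simp [dotC]
      rw [hneg, hβ.2, neg_zero]

theorem inRt_iff_mem_positiveRootsIn (β : V S → ℤ) :
    inRt S μ β ↔ β ∈ (quiver S).positiveRootsIn (latticePerp S μ) :=
  and_congr_left' (isPosRoot_iff_isPositiveRoot S β)

theorem inNRt_iff_mem_rootCone (β : V S → ℤ) :
    inNRt S μ β ↔ β ∈ (quiver S).rootCone (latticePerp S μ) := by
  simp only [inNRt, inRt_iff_mem_positiveRootsIn]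
  constructor
  · rintro ⟨r, γ, hγ, rfl⟩
    exact sum_mem fun t _ => AddSubmonoid.mem_closure_of_mem (hγ t)
  · intro hβ
    obtain ⟨s, hs, rfl⟩ := AddSubmonoid.exists_multiset_of_mem_closure hβ
    obtain ⟨γ, hγ⟩ := exists_fin_map_eq s
    exact ⟨s.card, γ, fun t => hs _ (hγ ▸ Multiset.mem_map_of_mem γ (Finset.mem_univ t)),
      by rw [Finset.sum, hγ]⟩

theorem inSig_iff_mem_sigmaSet (β : V S → ℤ) :
    inSig S μ β ↔ β ∈ (quiver S).sigmaSet (latticePerp S μ) := by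
  simp only [inSig, inRt_iff_mem_positiveRootsIn, pform_eq_p]
  refine and_congr_right' ⟨fun h s hcard hroots hsum => ?_, fun h r hr γ hγ hsum => ?_⟩
  · obtain ⟨γ, hγ⟩ := exists_fin_map_eq s
    have hlt := h s.card hcard γ
      (fun t => hroots _ (hγ ▸ Multiset.mem_map_of_mem γ (Finset.mem_univ t)))
      (by rw [Finset.sum, hγ, hsum])
    rwa [← hγ, Multiset.map_map]
  · have hlt := h (Finset.univ.val.map γ) (by simpa using hr) (by simpa using hγ) hsum.symm
    rwa [Multiset.map_map] at hlt

end Setup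

/-- For `α ∈ L⁺`: `α ∈ Σ̃_λ` iff `α ≠ 0`, `α ∈ ℕR̃⁺_λ`, and `(β, α-β) ≤ -2`
whenever `β` and `α-β` are both nonzero elements of `ℕR̃⁺_λ`. -/
theorem statement9 (S : Setup) (lamda : V S → ℂ) (α : V S → ℤ) (hα : inLpos S α) :
    inSig S lamda α ↔
      (α ≠ 0 ∧ inNRt S lamda α ∧
        ∀ β : V S → ℤ, inNRt S lamda β → inNRt S lamda (α - β) →
          β ≠ 0 → α - β ≠ 0 → bform S β (α - β) ≤ -2) := by
  simp only [inSig_iff_mem_sigmaSet, inNRt_iff_mem_rootCone, bform_eq_form]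
  exact statement9_general (quiver S) (latticePerp S lamda) α

end

end DS
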